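/- arXiv:1206.3688 — 2 statements merged into one kernel-verified Lean document; each statement's English description precedes it below -/
import Mathlib

section
/- Let X be a random variable with the property that X^μ has density y ↦ (sin(πμ)/(πμ)) · 1/(y² + 2y cos(πμ) + 1) on [0,∞), where μ ∈ (0,1). Then for every s ≥ 0, E[1/(1+sX)] = 1/(1+s^μ). -/
open MeasureTheory Real

/-!
With `e ^ a = s`, let `f w = 1 / (1 + e ^ (μ (w - a)))`, which is holomorphic on the strip
`|Im w| ≤ π` because `μ < 1`. The function `w ↦ (f w - f 0) / (1 - e ^ w)` has a removable
singularity at `0`; integrate it along the boundary of `[-T, T] × [-π, π]` and let `T → ∞`. The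
vertical sides contribute `2πi (1 - f 0) = 2πi / (1 + s ^ μ)`. On the horizontal sides
`1 - e ^ (t ± πi) = 1 + e ^ t`, and the jump `f (t - πi) - f (t + πi)` is, up to `2πi`, the density
of `log (s X)` at `t`, so that they contribute `2πi E[1 / (1 + s X)]`.
-/

open Asymptotics Complex Filter Set Topology
open scoped ComplexConjugate Interval

section Strip

variable {E : Type*} [NormedAddCommGroup E] [NormedSpace ℂ E]

lemma tendsto_intervalIntegral_vertical [CompleteSpace E] {F : ℂ → E} {a b : ℝ} {l : Filter ℝ}
    [l.IsCountablyGenerated] {L : E} (hF : ContinuousOn F (im ⁻¹' [[a, b]]))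
    (hlim : Tendsto F (comap re l ⊓ 𝓟 (im ⁻¹' [[a, b]])) (𝓝 L)) :
    Tendsto (fun x : ℝ ↦ ∫ y : ℝ in a..b, F (x + y * I)) l (𝓝 ((b - a) • L)) := by
  have hmem (x : ℝ) {y : ℝ} (hy : y ∈ Ι a b) : (x + y * I : ℂ) ∈ im ⁻¹' [[a, b]] := by
    simpa using uIoc_subset_uIcc hy
  obtain ⟨A, hA, hbound⟩ : ∃ A ∈ l, ∀ x ∈ A, ∀ y ∈ Ι a b, ‖F (x + y * I)‖ ≤ ‖L‖ + 1 := by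
    have := hlim.norm.eventually_le_const (lt_add_one ‖L‖)
    obtain ⟨A, hA, h⟩ := mem_comap.1 (mem_inf_principal.1 this)
    exact ⟨A, hA, fun x hx y hy ↦ h (show (x + y * I : ℂ).re ∈ A by simpa) (hmem x hy)⟩
  rw [← intervalIntegral.integral_const]
  refine intervalIntegral.tendsto_integral_filter_of_dominated_convergence (fun _ ↦ ‖L‖ + 1)
    (.of_forall fun x ↦ ?_) ?_ (by simp) (.of_forall fun y hy ↦ hlim.comp ?_)
  · exact (hF.comp (by fun_prop) fun y hy ↦ hmem x hy).aestronglyMeasurable measurableSet_uIoc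
  · filter_upwards [hA] with x hx using .of_forall (hbound x hx)
  · exact tendsto_inf.2 ⟨tendsto_comap_iff.2 (tendsto_id.congr fun x ↦ by simp),
      tendsto_principal.2 <| .of_forall (hmem · hy)⟩

lemma tendsto_intervalIntegral_horizontal_sub [CompleteSpace E] {F : ℂ → E} {a b : ℝ} (hab : a < b)
    {L₁ L₂ : E} (hF : DiffContOnCl ℂ F (im ⁻¹' Ioo a b))
    (hbot : Tendsto F (comap re atBot ⊓ 𝓟 (im ⁻¹' Icc a b)) (𝓝 L₁))
    (htop : Tendsto F (comap re atTop ⊓ 𝓟 (im ⁻¹' Icc a b)) (𝓝 L₂)) :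
    Tendsto (fun T : ℝ ↦ ∫ t : ℝ in -T..T, (F (t + a * I) - F (t + b * I))) atTop
      (𝓝 (I • (b - a) • (L₁ - L₂))) := by
  have hcont : ContinuousOn F (im ⁻¹' [[a, b]]) := by
    simpa [uIcc_of_le hab.le, closure_preimage_im, closure_Ioo hab.ne] using hF.continuousOn
  rw [← uIcc_of_le hab.le] at hbot htop
  have hleft := (tendsto_intervalIntegral_vertical hcont hbot).comp tendsto_neg_atTop_atBot
  have hright := tendsto_intervalIntegral_vertical hcont htop
  rw [smul_sub]
  refine ((hleft.sub hright).const_smul I).congr fun T ↦ ?_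
  have hrect := integral_boundary_rect_eq_zero_of_continuousOn_of_differentiableOn F ⟨-T, a⟩ ⟨T, b⟩
    (hcont.mono inter_subset_right)
    (hF.differentiableOn.mono (by
      rw [min_eq_left hab.le, max_eq_right hab.le]
      exact inter_subset_right))
  have hint {y : ℝ} (hy : y ∈ [[a, b]]) :
      IntervalIntegrable (fun t : ℝ ↦ F (t + y * I)) volume (-T) T :=
    (hcont.comp (by fun_prop) fun t _ ↦ by simpa using hy).intervalIntegrable
  rw [intervalIntegral.integral_sub (hint left_mem_uIcc) (hint right_mem_uIcc), smul_sub]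
  rw [add_sub_assoc, ← neg_sub (I • _), ← sub_eq_add_neg, sub_eq_zero] at hrect
  exact hrect.symm

lemma diffContOnCl_dslope [CompleteSpace E] {f : ℂ → E} {s : Set ℂ} {c : ℂ} (hc : s ∈ 𝓝 c)
    (hf : DiffContOnCl ℂ f s) : DiffContOnCl ℂ (dslope f c) s :=
  ⟨(differentiableOn_dslope hc).2 hf.differentiableOn,
    (continuousOn_dslope (mem_of_superset hc subset_closure)).2
      ⟨hf.continuousOn, hf.differentiableAt' hc⟩⟩

lemma dslope_cexp_zero_ne_zero {w : ℂ} (hw : |w.im| < 2 * π) : dslope cexp 0 w ≠ 0 := by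
  rcases eq_or_ne w 0 with rfl | hw0
  · simp
  rw [dslope_of_ne _ hw0, slope_def_field, Complex.exp_zero, sub_zero]
  refine div_ne_zero (sub_ne_zero.2 fun h ↦ hw0 ?_) hw0
  obtain ⟨n, rfl⟩ := Complex.exp_eq_one_iff.1 h
  have hn : |(n : ℝ)| < 1 := by
    simpa [abs_mul, abs_of_pos pi_pos, pi_pos] using hw
  obtain rfl : n = 0 := Int.abs_lt_one_iff.1 (mod_cast hn)
  simp

/-- The quotient `(f w - f 0) / (1 - exp w)`, with its removable singularity at `0` filled in by
writing it in terms of difference quotients at `0`. -/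
noncomputable def expQuotient (f : ℂ → E) (w : ℂ) : E :=
  -((dslope cexp 0 w)⁻¹ • dslope f 0 w)

lemma expQuotient_of_ne (f : ℂ → E) {w : ℂ} (hw : w ≠ 0) :
    expQuotient f w = (1 - cexp w)⁻¹ • (f w - f 0) := by
  rw [expQuotient, dslope_of_ne _ hw, dslope_of_ne _ hw, slope_def_field, slope_def_module,
    sub_zero, Complex.exp_zero, smul_smul, inv_div, div_mul_eq_mul_div, mul_inv_cancel₀ hw, one_div,
    ← neg_smul, ← inv_neg, neg_sub]

lemma expQuotient_eventuallyEq (f : ℂ → E) {l : Filter ℝ} (hl : ∀ᶠ x in l, x ≠ 0) (S : Set ℂ) :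
    (fun w ↦ (1 - cexp w)⁻¹ • (f w - f 0)) =ᶠ[comap re l ⊓ 𝓟 S] expQuotient f := by
  filter_upwards [(tendsto_comap.eventually hl).filter_mono inf_le_left] with w hw
  exact (expQuotient_of_ne f fun h ↦ hw (by simp [h])).symm

lemma diffContOnCl_expQuotient [CompleteSpace E] {f : ℂ → E}
    (hf : DiffContOnCl ℂ f (im ⁻¹' Ioo (-π) π)) :
    DiffContOnCl ℂ (expQuotient f) (im ⁻¹' Ioo (-π) π) := by
  have hnhds : im ⁻¹' Ioo (-π) π ∈ 𝓝 (0 : ℂ) :=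
    (isOpen_Ioo.preimage continuous_im).mem_nhds (by simp [pi_pos])
  refine (((diffContOnCl_dslope hnhds Complex.differentiable_exp.diffContOnCl).inv
    fun w hw ↦ dslope_cexp_zero_ne_zero ?_).smul (diffContOnCl_dslope hnhds hf)).neg
  rw [closure_preimage_im, closure_Ioo (neg_lt_self pi_pos).ne] at hw
  exact (abs_le.2 hw).trans_lt (by linarith [pi_pos])

lemma expQuotient_sub_pi_mul_I_sub_add (f : ℂ → E) (t : ℝ) :
    expQuotient f (t - π * I) - expQuotient f (t + π * I) =
      (1 + cexp t)⁻¹ • (f (t - π * I) - f (t + π * I)) := by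
  have hne {w : ℂ} (hw : w.im ≠ 0) : w ≠ 0 := fun h ↦ hw (by simp [h])
  rw [expQuotient_of_ne f (hne (by simp [pi_ne_zero])),
    expQuotient_of_ne f (hne (by simp [pi_ne_zero])), exp_sub_pi_mul_I, exp_add_pi_mul_I,
    sub_neg_eq_add, ← smul_sub, sub_sub_sub_cancel_right]

lemma tendsto_expQuotient_atBot {f : ℂ → E} {S : Set ℂ} {L : E}
    (hf : Tendsto f (comap re atBot ⊓ 𝓟 S) (𝓝 L)) :
    Tendsto (expQuotient f) (comap re atBot ⊓ 𝓟 S) (𝓝 (L - f 0)) := by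
  have hexp := tendsto_exp_comap_re_atBot.mono_left (inf_le_left (b := 𝓟 S))
  refine Tendsto.congr' (expQuotient_eventuallyEq f (eventually_ne_atBot 0) S) ?_
  simpa using ((hexp.const_sub 1).inv₀ (by simp)).smul (hf.sub_const (f 0))

lemma tendsto_expQuotient_atTop {f : ℂ → E} {S : Set ℂ}
    (hf : f =o[comap re atTop ⊓ 𝓟 S] cexp) :
    Tendsto (expQuotient f) (comap re atTop ⊓ 𝓟 S) (𝓝 0) := by
  have hexp := tendsto_exp_comap_re_atTop.mono_left (inf_le_left (b := 𝓟 S))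
  have hnum : (fun w ↦ f w - f 0) =o[comap re atTop ⊓ 𝓟 S] cexp :=
    hf.sub ((isLittleO_const_id_cobounded (f 0)).comp_tendsto hexp)
  have hden : cexp =O[comap re atTop ⊓ 𝓟 S] fun w ↦ 1 - cexp w :=
    ((isLittleO_const_id_cobounded (1 : ℂ)).comp_tendsto hexp).right_isBigO_sub.trans
      (isBigO_of_le _ fun w ↦ (norm_sub_rev _ _).le)
  refine Tendsto.congr' (expQuotient_eventuallyEq f (eventually_ne_atTop 0) S) ?_
  exact (hnum.trans_isBigO hden).tendsto_inv_smul_nhds_zero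

theorem tendsto_intervalIntegral_inv_one_add_exp_smul_sub [CompleteSpace E] {f : ℂ → E} {L : E}
    (hf : DiffContOnCl ℂ f (im ⁻¹' Ioo (-π) π))
    (hbot : Tendsto f (comap re atBot ⊓ 𝓟 (im ⁻¹' Icc (-π) π)) (𝓝 L))
    (htop : f =o[comap re atTop ⊓ 𝓟 (im ⁻¹' Icc (-π) π)] cexp) :
    Tendsto (fun T : ℝ ↦ ∫ t : ℝ in -T..T, (1 + cexp t)⁻¹ • (f (t - π * I) - f (t + π * I))) atTop
      (𝓝 ((2 * π * I) • (L - f 0))) := by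
  have h := tendsto_intervalIntegral_horizontal_sub (neg_lt_self pi_pos)
    (diffContOnCl_expQuotient hf) (tendsto_expQuotient_atBot hbot) (tendsto_expQuotient_atTop htop)
  have hsmul : I • (π - -π) • (L - f 0 - 0) = (2 * π * I) • (L - f 0) := by
    rw [sub_zero, ← Complex.coe_smul, smul_smul]
    push_cast
    ring_nf
  simpa only [ofReal_neg, neg_mul, ← sub_eq_add_neg, expQuotient_sub_pi_mul_I_sub_add,
    hsmul] using h

end Strip

section Logistic

lemma one_add_cexp_ne_zero {z : ℂ} (hz : |z.im| < π) : 1 + cexp z ≠ 0 := by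
  intro h
  have hlog := Complex.log_exp (abs_lt.1 hz).1 (abs_lt.1 hz).2.le
  rw [eq_neg_of_add_eq_zero_right h, Complex.log_neg_one] at hlog
  simp [← hlog, abs_of_pos pi_pos] at hz

lemma conj_inv_sub_inv_one_add_mul_cexp (u θ : ℝ) :
    conj (1 + u * cexp (θ * I))⁻¹ - (1 + u * cexp (θ * I))⁻¹ =
      2 * I * (u * Real.sin θ / (u ^ 2 + 2 * u * Real.cos θ + 1) : ℝ) := by
  have him : (1 + u * cexp (θ * I)).im = u * Real.sin θ := by simp [exp_ofReal_mul_I_im]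
  have hnormSq : normSq (1 + u * cexp (θ * I)) = u ^ 2 + 2 * u * Real.cos θ + 1 := by
    simp only [normSq_apply, add_re, one_re, re_ofReal_mul, exp_ofReal_mul_I_re, him]
    linear_combination u ^ 2 * Real.sin_sq_add_cos_sq θ
  rw [← neg_sub, sub_conj, inv_im, him, hnormSq]
  push_cast
  ring

/-- The function `x ↦ 1 / (1 + (x / s) ^ μ)` in the logarithmic coordinates `x = exp w` and
`s = exp a`. -/
noncomputable def logLogistic (μ a : ℝ) (w : ℂ) : ℂ :=
  (1 + cexp (μ * (w - a)))⁻¹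

/-- The density of `X ^ μ`, where `X` is the ratio of two independent positive `μ`-stable
variables. -/
noncomputable def stableRatioDensity (μ y : ℝ) : ℝ :=
  Real.sin (π * μ) / (π * μ) * (1 / (y ^ 2 + 2 * y * Real.cos (π * μ) + 1))

/-- The density of `log (exp a * X)`, where `X ^ μ` has density `stableRatioDensity μ`. -/
noncomputable def logStableRatioDensity (μ a t : ℝ) : ℝ :=
  μ * rexp (μ * (t - a)) * stableRatioDensity μ (rexp (μ * (t - a)))

variable {μ : ℝ}

lemma logLogistic_conj (μ a : ℝ) (w : ℂ) :
    logLogistic μ a (conj w) = conj (logLogistic μ a w) := by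
  simp [logLogistic, ← Complex.exp_conj]

lemma diffContOnCl_logLogistic (hμ : μ ∈ Ioo 0 1) (a : ℝ) :
    DiffContOnCl ℂ (logLogistic μ a) (im ⁻¹' Ioo (-π) π) := by
  refine DiffContOnCl.inv (Differentiable.diffContOnCl (by fun_prop)) fun w hw ↦
    one_add_cexp_ne_zero ?_
  rw [closure_preimage_im, closure_Ioo (neg_lt_self pi_pos).ne] at hw
  have hw : |w.im| ≤ π := abs_le.2 hw
  simp only [im_ofReal_mul, sub_im, ofReal_im, sub_zero, abs_mul, abs_of_pos hμ.1]
  nlinarith [pi_pos, hμ.1, hμ.2]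

lemma tendsto_logLogistic_atBot (hμ : 0 < μ) (a : ℝ) :
    Tendsto (logLogistic μ a) (comap re atBot) (𝓝 1) := by
  have hlin : Tendsto (fun w : ℂ ↦ μ * (w - a)) (comap re atBot) (comap re atBot) := by
    refine tendsto_comap_iff.2 ?_
    simpa [Function.comp_def, sub_eq_add_neg] using
      (tendsto_atBot_add_const_right _ (-a) tendsto_comap).const_mul_atBot hμ
  rw [← inv_one, ← add_zero (1 : ℂ)]
  exact ((tendsto_exp_comap_re_atBot.comp hlin).const_add 1).inv₀ (by simp)

lemma tendsto_logLogistic_atTop (hμ : 0 < μ) (a : ℝ) :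
    Tendsto (logLogistic μ a) (comap re atTop) (𝓝 0) := by
  have hlin : Tendsto (fun w : ℂ ↦ μ * (w - a)) (comap re atTop) (comap re atTop) := by
    refine tendsto_comap_iff.2 ?_
    simpa [Function.comp_def, sub_eq_add_neg] using
      (tendsto_atTop_add_const_right _ (-a) tendsto_comap).const_mul_atTop hμ
  exact tendsto_inv₀_cobounded.comp <|
    (tendsto_const_add_cobounded 1).comp (tendsto_exp_comap_re_atTop.comp hlin)

lemma logLogistic_sub_pi_mul_I_sub_add (hμ : μ ≠ 0) (a t : ℝ) :
    logLogistic μ a (t - π * I) - logLogistic μ a (t + π * I) =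
      2 * π * I * logStableRatioDensity μ a t := by
  have hconj : (t - π * I : ℂ) = conj (t + π * I) := by simp [sub_eq_add_neg]
  have hpolar : logLogistic μ a (t + π * I) =
      (1 + (rexp (μ * (t - a)) : ℝ) * cexp ((π * μ : ℝ) * I))⁻¹ := by
    rw [logLogistic, ofReal_exp, ← Complex.exp_add]
    push_cast
    ring_nf
  have hπ : (π : ℂ) ≠ 0 := ofReal_ne_zero.2 pi_ne_zero
  have hμ' : (μ : ℂ) ≠ 0 := ofReal_ne_zero.2 hμ
  rw [hconj, logLogistic_conj, hpolar, conj_inv_sub_inv_one_add_mul_cexp,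
    logStableRatioDensity, stableRatioDensity]
  push_cast
  field_simp

lemma sin_pi_mul_pos (hμ : μ ∈ Ioo 0 1) : 0 < Real.sin (π * μ) :=
  Real.sin_pos_of_pos_of_lt_pi (mul_pos pi_pos hμ.1) (mul_lt_of_lt_one_right pi_pos hμ.2)

lemma sq_add_two_mul_mul_cos_add_one_pos {θ : ℝ} (hθ : Real.sin θ ≠ 0) (y : ℝ) :
    0 < y ^ 2 + 2 * y * Real.cos θ + 1 := by
  have := sq_pos_of_ne_zero hθ
  nlinarith [Real.sin_sq_add_cos_sq θ, sq_nonneg (y + Real.cos θ)]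

lemma stableRatioDensity_nonneg (hμ : μ ∈ Ioo 0 1) (y : ℝ) : 0 ≤ stableRatioDensity μ y := by
  have hsin := sin_pi_mul_pos hμ
  have hden := sq_add_two_mul_mul_cos_add_one_pos hsin.ne' y
  have := hμ.1
  unfold stableRatioDensity
  positivity

lemma continuous_stableRatioDensity (hμ : μ ∈ Ioo 0 1) : Continuous (stableRatioDensity μ) := by
  have hden (y : ℝ) := (sq_add_two_mul_mul_cos_add_one_pos (sin_pi_mul_pos hμ).ne' y).ne'
  unfold stableRatioDensity
  fun_prop (disch := assumption)

lemma logStableRatioDensity_nonneg (hμ : μ ∈ Ioo 0 1) (a t : ℝ) :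
    0 ≤ logStableRatioDensity μ a t :=
  mul_nonneg (mul_nonneg hμ.1.le (Real.exp_nonneg _)) (stableRatioDensity_nonneg hμ _)

lemma continuous_logStableRatioDensity (hμ : μ ∈ Ioo 0 1) (a : ℝ) :
    Continuous (logStableRatioDensity μ a) := by
  have := continuous_stableRatioDensity hμ
  unfold logStableRatioDensity
  fun_prop

lemma tendsto_intervalIntegral_logStableRatioDensity_div (hμ : μ ∈ Ioo 0 1) (a : ℝ) :
    Tendsto (fun T : ℝ ↦ ∫ t in -T..T, logStableRatioDensity μ a t / (1 + rexp t)) atTop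
      (𝓝 (1 / (1 + rexp (μ * a)))) := by
  have htop : logLogistic μ a =o[comap re atTop ⊓ 𝓟 (im ⁻¹' Icc (-π) π)] cexp :=
    (((tendsto_logLogistic_atTop hμ.1 a).isBigO_one ℂ).trans_isLittleO
      ((isLittleO_const_id_cobounded 1).comp_tendsto tendsto_exp_comap_re_atTop)).mono inf_le_left
  have hstrip := tendsto_intervalIntegral_inv_one_add_exp_smul_sub (diffContOnCl_logLogistic hμ a)
    ((tendsto_logLogistic_atBot hμ.1 a).mono_left inf_le_left) htop
  have hlimit : 1 - logLogistic μ a 0 = (1 / (1 + rexp (μ * a)) : ℝ) := by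
    have : 1 - (1 + rexp (μ * (0 - a)))⁻¹ = 1 / (1 + rexp (μ * a)) := by
      rw [zero_sub, mul_neg, Real.exp_neg]
      field_simp
      ring
    rw [← this, logLogistic]
    push_cast
    rfl
  have hjump (t : ℝ) : (1 + cexp t)⁻¹ •
      (logLogistic μ a (t - π * I) - logLogistic μ a (t + π * I)) =
        2 * π * I * (logStableRatioDensity μ a t / (1 + rexp t) : ℝ) := by
    rw [logLogistic_sub_pi_mul_I_sub_add hμ.1.ne', smul_eq_mul]
    push_cast
    ring
  have hI : 2 * π * I ≠ 0 := by simp [pi_ne_zero]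
  simp only [hjump, intervalIntegral.integral_const_mul, intervalIntegral.integral_ofReal, hlimit,
    smul_eq_mul] at hstrip
  have hcancel := hstrip.const_mul (2 * π * I)⁻¹
  simp only [inv_mul_cancel_left₀ hI] at hcancel
  exact tendsto_ofReal_iff.1 hcancel

lemma integral_logStableRatioDensity_div (hμ : μ ∈ Ioo 0 1) (a : ℝ) :
    ∫ t, logStableRatioDensity μ a t / (1 + rexp t) = 1 / (1 + rexp (μ * a)) := by
  have hlim := tendsto_intervalIntegral_logStableRatioDensity_div hμ a
  have hnorm (t : ℝ) : ‖logStableRatioDensity μ a t / (1 + rexp t)‖ =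
      logStableRatioDensity μ a t / (1 + rexp t) :=
    Real.norm_of_nonneg (div_nonneg (logStableRatioDensity_nonneg hμ a t) (by positivity))
  have hcont : Continuous fun t ↦ logStableRatioDensity μ a t / (1 + rexp t) :=
    (continuous_logStableRatioDensity hμ a).div (by fun_prop) fun t ↦ by positivity
  have hint : Integrable fun t ↦ logStableRatioDensity μ a t / (1 + rexp t) :=
    integrable_of_intervalIntegral_norm_tendsto _ (fun T : ℝ ↦ hcont.integrableOn_Ioc)
      tendsto_neg_atTop_atBot tendsto_id (by simpa only [hnorm, id] using hlim)
  exact tendsto_nhds_unique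
    (intervalIntegral_tendsto_integral hint tendsto_neg_atTop_atBot tendsto_id) hlim

lemma integral_exp_mul_smul_comp_exp_mul {E : Type*} [NormedAddCommGroup E] [NormedSpace ℝ E]
    {c : ℝ} (hc : 0 < c) (a : ℝ) (g : ℝ → E) :
    ∫ t, (c * rexp (c * (t - a))) • g (rexp (c * (t - a))) = ∫ y in Ioi 0, g y := by
  rw [integral_sub_right_eq_self (fun t ↦ (c * rexp (c * t)) • g (rexp (c * t)))]
  simp only [mul_smul]
  rw [integral_smul, Measure.integral_comp_mul_left (fun u ↦ rexp u • g (rexp u)),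
    abs_of_pos (inv_pos.2 hc), smul_inv_smul₀ hc.ne', ← Real.range_exp, ← image_univ,
    integral_image_eq_integral_abs_deriv_smul .univ
      (fun x _ ↦ (Real.hasDerivAt_exp x).hasDerivWithinAt) Real.exp_injective.injOn]
  simp

lemma integral_stableRatioDensity_mul (hμ : μ ∈ Ioo 0 1) {s : ℝ} (hs : 0 < s) :
    ∫ y in Ioi 0, stableRatioDensity μ y * (1 / (1 + s * y ^ (1 / μ))) = 1 / (1 + s ^ μ) := by
  obtain ⟨a, rfl⟩ : ∃ a, rexp a = s := ⟨Real.log s, Real.exp_log hs⟩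
  have hscale (t : ℝ) : rexp a * rexp (μ * (t - a)) ^ (1 / μ) = rexp t := by
    rw [← Real.exp_mul, mul_one_div, mul_div_cancel_left₀ _ hμ.1.ne', ← Real.exp_add,
      add_sub_cancel]
  calc ∫ y in Ioi 0, stableRatioDensity μ y * (1 / (1 + rexp a * y ^ (1 / μ)))
      = ∫ t, logStableRatioDensity μ a t / (1 + rexp t) := by
        rw [← integral_exp_mul_smul_comp_exp_mul hμ.1 a]
        simp only [hscale, logStableRatioDensity, smul_eq_mul, mul_one_div, mul_div_assoc]
    _ = 1 / (1 + rexp a ^ μ) := by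
        rw [integral_logStableRatioDensity_div hμ, ← Real.exp_mul, mul_comm]

end Logistic

theorem stieltjes_transform_of_stable_ratio
    {Ω : Type*} [MeasurableSpace Ω] (P : Measure Ω) [IsProbabilityMeasure P]
    (μ : ℝ) (hμ : μ ∈ Set.Ioo (0:ℝ) 1)
    (X : Ω → ℝ) (hX : Measurable X) (hXpos : ∀ ω, 0 ≤ X ω)
    (hlaw : P.map (fun ω => X ω ^ μ) =
      (volume.restrict (Set.Ici (0:ℝ))).withDensity
        (fun y => ENNReal.ofReal (Real.sin (π * μ) / (π * μ) *
          (1 / (y ^ 2 + 2 * y * Real.cos (π * μ) + 1))))) :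
    ∀ s : ℝ, 0 ≤ s → ∫ ω, 1 / (1 + s * X ω) ∂P = 1 / (1 + s ^ μ) := by
  intro s hs
  rcases hs.eq_or_lt with rfl | hs
  · simp [Real.zero_rpow hμ.1.ne']
  replace hlaw : P.map (fun ω ↦ X ω ^ μ) = (volume.restrict (Ici 0)).withDensity
      (fun y ↦ ENNReal.ofReal (stableRatioDensity μ y)) := hlaw
  have hmeas : Measurable (stableRatioDensity μ) := (continuous_stableRatioDensity hμ).measurable
  calc ∫ ω, 1 / (1 + s * X ω) ∂P
      = ∫ ω, 1 / (1 + s * (X ω ^ μ) ^ (1 / μ)) ∂P := by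
        simp only [one_div μ, Real.rpow_rpow_inv (hXpos _) hμ.1.ne']
    _ = ∫ y, 1 / (1 + s * y ^ (1 / μ)) ∂(P.map fun ω ↦ X ω ^ μ) :=
        (integral_map (f := fun y : ℝ ↦ 1 / (1 + s * y ^ (1 / μ))) (hX.pow_const μ).aemeasurable
          (Measurable.aestronglyMeasurable (by fun_prop))).symm
    _ = ∫ y in Ioi 0, stableRatioDensity μ y * (1 / (1 + s * y ^ (1 / μ))) := by
        rw [hlaw, integral_withDensity_eq_integral_toReal_smul (by fun_prop)
          (.of_forall fun _ ↦ ENNReal.ofReal_lt_top), integral_Ici_eq_integral_Ioi]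
        simp only [ENNReal.toReal_ofReal (stableRatioDensity_nonneg hμ _),
          smul_eq_mul]
    _ = 1 / (1 + s ^ μ) := integral_stableRatioDensity_mul hμ hs
end

section
/- Let μ ∈ (0,1) and let X be a nonnegative random variable such that X^μ has density y ↦ (sin(πμ)/(πμ)) · 1/(y² + 2y cos(πμ) + 1) on [0,∞). Then for every s with 0 < s < μ, E[X^s] = sin(πs)/(μ sin(πs/μ)). -/
open MeasureTheory Real

/-!
By Fubini, the Mellin transform at `z` of the Laplace transform of `g` is `Γ(z)` times the Mellin
transform of `g` at `1 - z`. For `g = exp (-q ·)` the reflection formula turns this into the Mellin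
transform `π / sin (π z) * p ^ (-z) * q ^ (z - 1)` of `(p y + q)⁻¹`, for any complex `p`, `q` in the
right half-plane. Since `y² + 2 y cos θ + 1 = (p y + q) (q y + p)` with `p = exp (-iθ/2)` and
`q = exp (iθ/2)`, partial fractions give the Mellin transform
`∫ y ^ (z - 1) sin θ / (y² + 2 y cos θ + 1) dy = π sin ((1 - z) θ) / sin (π z)` on `0 < re z < 1`,
and the identity theorem extends it to the strip `0 < re z < 2` of convergence. Up to the factor
`π μ`, the moment `E[X ^ s]` is the value at `z = s / μ + 1` for `θ = π μ`, so that the extension is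
what reaches `re s > 0`.
-/

open Set Filter Topology

theorem hasMellin_congr {E : Type*} [NormedAddCommGroup E] [NormedSpace ℂ E] {f g : ℝ → E} {z : ℂ}
    {m : E} (h : EqOn f g (Ioi 0)) : HasMellin f z m ↔ HasMellin g z m := by
  have hsmul : EqOn (fun t : ℝ ↦ (t : ℂ) ^ (z - 1) • f t) (fun t ↦ (t : ℂ) ^ (z - 1) • g t)
      (Ioi 0) := fun t ht ↦ by simp only [h ht]
  rw [HasMellin, HasMellin, MellinConvergent, MellinConvergent, mellin, mellin,
    integrableOn_congr_fun hsmul measurableSet_Ioi, setIntegral_congr_fun measurableSet_Ioi hsmul]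

theorem mellinConvergent_cexp_neg_mul {z r : ℂ} (hz : 0 < z.re) (hr : 0 < r.re) :
    MellinConvergent (fun t : ℝ ↦ Complex.exp (-(r * t))) z := by
  have hcont : Continuous fun t : ℝ ↦ Complex.exp (-(r * t)) := by fun_prop
  refine mellinConvergent_of_isBigO_rpow_exp (b := 0) hr
    (hcont.locallyIntegrable.locallyIntegrableOn _) (.of_norm_left ?_) ?_ hz
  · simpa [Complex.norm_exp] using Asymptotics.isBigO_refl (fun t : ℝ ↦ exp (-(r.re * t))) atTop
  · simpa using (hcont.tendsto' 0 1 (by simp)).mono_left nhdsWithin_le_nhds |>.isBigO_one ℝ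

theorem differentiableAt_mellin_cexp_neg_mul {z r : ℂ} (hz : 0 < z.re) (hr : 0 < r.re) :
    DifferentiableAt ℂ (fun r : ℂ ↦ mellin (fun t : ℝ ↦ Complex.exp (-(r * t))) z) r := by
  let r' : ℂ := (r.re / 2 : ℝ)
  have hr' : r'.re = r.re / 2 := rfl
  have hnhds : {w : ℂ | r'.re < w.re} ∈ 𝓝 r :=
    (isOpen_lt continuous_const Complex.continuous_re).mem_nhds (by rw [mem_ofPred_eq]; linarith)
  refine (hasDerivAt_integral_of_dominated_loc_of_deriv_le
    (μ := volume.restrict (Ioi 0))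
    (F := fun r (t : ℝ) ↦ (t : ℂ) ^ (z - 1) • Complex.exp (-(r * t)))
    (F' := fun r (t : ℝ) ↦ (t : ℂ) ^ (z - 1) • (Complex.exp (-(r * t)) * -t))
    (bound := fun t : ℝ ↦ ‖(t : ℂ) ^ (z + 1 - 1) • Complex.exp (-(r' * t))‖)
    hnhds (.of_forall fun w ↦ (by fun_prop : Measurable _).aestronglyMeasurable)
    (mellinConvergent_cexp_neg_mul hz hr) (by fun_prop : Measurable _).aestronglyMeasurable ?_
    (mellinConvergent_cexp_neg_mul (by simp; linarith) (by linarith)).norm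
    (ae_of_all _ fun t w _ ↦ ?_)).2.differentiableAt
  · filter_upwards [ae_restrict_mem measurableSet_Ioi] with t (ht : 0 < t) w (hw : r'.re < w.re)
    have hpow : (t : ℂ) ^ (z + 1 - 1) = (t : ℂ) ^ (z - 1) * t := by
      rw [add_sub_right_comm, Complex.cpow_add _ _ (by exact_mod_cast ht.ne'), Complex.cpow_one]
    rw [hpow, smul_eq_mul, smul_eq_mul, mul_assoc]
    simp only [norm_mul, norm_neg, Complex.norm_exp, Complex.neg_re, Complex.re_mul_ofReal]
    rw [mul_comm ‖(t : ℂ)‖]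
    gcongr
  · simpa using (((hasDerivAt_id w).mul_const (t : ℂ)).neg.cexp.const_mul ((t : ℂ) ^ (z - 1)))

theorem mellin_cexp_neg_mul {z r : ℂ} (hz : 0 < z.re) (hr : 0 < r.re) :
    mellin (fun t : ℝ ↦ Complex.exp (-(r * t))) z = Complex.Gamma z * r ^ (-z) := by
  let U : Set ℂ := {w | 0 < w.re}
  have hU : IsOpen U := isOpen_lt continuous_const Complex.continuous_re
  have hreal : ∀ x : ℝ, 0 < x →
      mellin (fun t : ℝ ↦ Complex.exp (-(x * t))) z = Complex.Gamma z * (x : ℂ) ^ (-z) := by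
    intro x hx
    have harg : (x : ℂ).arg ≠ π := by simpa [Complex.arg_ofReal_of_nonneg hx.le] using pi_pos.ne
    simp only [mellin, smul_eq_mul]
    rw [Complex.integral_cpow_mul_exp_neg_mul_Ioi hz hx, one_div,
      Complex.inv_cpow _ _ harg, Complex.cpow_neg, mul_comm]
  have hlim : Tendsto (fun x : ℝ ↦ (x : ℂ)) (𝓝[≠] 1) (𝓝[≠] 1) :=
    (Complex.continuous_ofReal.tendsto' 1 1 Complex.ofReal_one).inf
      (tendsto_principal_principal.2 fun x hx ↦ by simpa using hx)
  refine AnalyticOnNhd.eqOn_of_preconnected_of_frequently_eq (U := U) (z₀ := 1)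
    (g := fun r ↦ Complex.Gamma z * r ^ (-z))
    (DifferentiableOn.analyticOnNhd (fun w hw ↦
      (differentiableAt_mellin_cexp_neg_mul hz hw).differentiableWithinAt) hU)
    (DifferentiableOn.analyticOnNhd (fun w hw ↦ ?_) hU)
    (convex_halfSpace_re_gt 0).isPreconnected (by simp [U])
    (hlim.frequently (Eventually.frequently ?_)) hr
  · exact ((differentiableAt_id.cpow_const (Or.inl hw)).const_mul _).differentiableWithinAt
  · exact eventually_nhdsWithin_of_eventually_nhds
      ((eventually_gt_nhds zero_lt_one).mono fun x hx ↦ hreal x hx)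

theorem aestronglyMeasurable_of_mellinConvergent {g : ℝ → ℂ} {z : ℂ} (hg : MellinConvergent g z) :
    AEStronglyMeasurable g (volume.restrict (Ioi 0)) := by
  have hpow : AEStronglyMeasurable (fun t : ℝ ↦ (t : ℂ) ^ (1 - z)) (volume.restrict (Ioi 0)) :=
    (by fun_prop : Measurable _).aestronglyMeasurable
  refine (hpow.mul hg.aestronglyMeasurable).congr ?_
  filter_upwards [ae_restrict_mem measurableSet_Ioi] with t (ht : 0 < t)
  have htC : (t : ℂ) ≠ 0 := by exact_mod_cast ht.ne'
  rw [Pi.mul_apply, smul_eq_mul, ← mul_assoc, ← Complex.cpow_add _ _ htC, sub_add_sub_cancel',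
    sub_self, Complex.cpow_zero, one_mul]

theorem integral_norm_cpow_mul_cexp_neg_mul {z r : ℂ} (hz : 0 < z.re) (hr : 0 < r.re) :
    ∫ y in Ioi (0 : ℝ), ‖(y : ℂ) ^ (z - 1) * Complex.exp (-(r * y))‖ =
      Gamma z.re * r.re ^ (-z.re) := by
  rw [rpow_neg hr.le, ← inv_rpow hr.le, ← one_div, mul_comm,
    ← integral_rpow_mul_exp_neg_mul_Ioi hz hr]
  refine setIntegral_congr_fun measurableSet_Ioi fun y (hy : 0 < y) ↦ ?_
  simp [Complex.norm_exp, Complex.norm_cpow_eq_rpow_re_of_pos hy]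

theorem integrable_cpow_mul_laplaceKernel {g : ℝ → ℂ} {p z : ℂ} (hp : 0 < p.re) (hz : 0 < z.re)
    (hg : MellinConvergent g (1 - z)) :
    Integrable (fun x : ℝ × ℝ ↦
        (x.1 : ℂ) ^ (z - 1) * (g x.2 * Complex.exp (-(p * x.1 * x.2))))
      ((volume.restrict (Ioi 0)).prod (volume.restrict (Ioi 0))) := by
  have hmeas : AEStronglyMeasurable (fun x : ℝ × ℝ ↦
      (x.1 : ℂ) ^ (z - 1) * (g x.2 * Complex.exp (-(p * x.1 * x.2))))
      ((volume.restrict (Ioi 0)).prod (volume.restrict (Ioi 0))) := by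
    refine .mul ?_ (.mul (aestronglyMeasurable_of_mellinConvergent hg).comp_snd ?_)
      <;> exact (by fun_prop : Measurable _).aestronglyMeasurable
  have hre : ∀ t : ℝ, 0 < t → 0 < (p * t).re := fun t ht ↦ by
    simpa using mul_pos hp ht
  have hrw : ∀ y t : ℝ, (y : ℂ) ^ (z - 1) * (g t * Complex.exp (-(p * y * t))) =
      g t * ((y : ℂ) ^ (z - 1) * Complex.exp (-(p * t * y))) := fun y t ↦ by ring_nf
  refine (integrable_prod_iff' hmeas).2 ⟨?_, ?_⟩
  · filter_upwards [ae_restrict_mem measurableSet_Ioi] with t ht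
    simpa only [hrw, smul_eq_mul] using
      (mellinConvergent_cexp_neg_mul hz (hre t ht)).const_mul (g t)
  · refine (hg.norm.const_mul (Gamma z.re * p.re ^ (-z.re))).congr ?_
    filter_upwards [ae_restrict_mem measurableSet_Ioi] with t (ht : 0 < t)
    simp only [hrw, norm_mul _ (_ * _), integral_const_mul]
    rw [integral_norm_cpow_mul_cexp_neg_mul hz (hre t ht), Complex.re_mul_ofReal,
      mul_rpow hp.le ht.le, norm_smul, Complex.norm_cpow_eq_rpow_re_of_pos ht, sub_sub_cancel_left,
      Complex.neg_re]
    ring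

theorem ofReal_mul_cpow {r : ℝ} (hr : 0 ≤ r) (w s : ℂ) :
    (r * w : ℂ) ^ s = (r : ℂ) ^ s * w ^ s := by
  rcases eq_or_ne s 0 with rfl | hs
  · simp only [Complex.cpow_zero, mul_one]
  rcases hr.eq_or_lt with rfl | hr
  · simp only [Complex.ofReal_zero, zero_mul, Complex.zero_cpow hs]
  rcases eq_or_ne w 0 with rfl | hw
  · simp only [mul_zero, Complex.zero_cpow hs]
  have hrC : (r : ℂ) ≠ 0 := by exact_mod_cast hr.ne'
  rw [Complex.cpow_def_of_ne_zero (mul_ne_zero hrC hw), Complex.log_ofReal_mul hr hw,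
    Complex.ofReal_log hr.le, add_mul, Complex.exp_add, ← Complex.cpow_def_of_ne_zero hrC,
    ← Complex.cpow_def_of_ne_zero hw]

theorem hasMellin_laplace {g : ℝ → ℂ} {p z : ℂ} (hp : 0 < p.re) (hz : 0 < z.re)
    (hg : MellinConvergent g (1 - z)) :
    HasMellin (fun y : ℝ ↦ ∫ t in Ioi (0 : ℝ), g t * Complex.exp (-(p * y * t))) z
      (Complex.Gamma z * p ^ (-z) * mellin g (1 - z)) := by
  have hint := integrable_cpow_mul_laplaceKernel hp hz hg
  simp only [HasMellin, MellinConvergent, mellin, smul_eq_mul, ← integral_const_mul]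
  refine ⟨hint.integral_prod_left, ?_⟩
  rw [integral_integral_swap hint]
  refine setIntegral_congr_fun measurableSet_Ioi fun t (ht : 0 < t) ↦ ?_
  have hpt : 0 < (p * t).re := by simpa using mul_pos hp ht
  calc ∫ y in Ioi (0 : ℝ), (y : ℂ) ^ (z - 1) * (g t * Complex.exp (-(p * y * t)))
      = g t * mellin (fun y : ℝ ↦ Complex.exp (-(p * t * y))) z := by
        rw [mellin, ← integral_const_mul]
        congr 1 with y
        rw [smul_eq_mul, mul_right_comm p, mul_left_comm]
    _ = g t * (Complex.Gamma z * (p * t) ^ (-z)) := by rw [mellin_cexp_neg_mul hz hpt]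
    _ = Complex.Gamma z * p ^ (-z) * ((t : ℂ) ^ (1 - z - 1) * g t) := by
        rw [sub_sub_cancel_left, mul_comm p, ofReal_mul_cpow ht.le]
        ring

theorem hasMellin_inv_mul_add {p q z : ℂ} (hp : 0 < p.re) (hq : 0 < q.re) (hz₀ : 0 < z.re)
    (hz₁ : z.re < 1) :
    HasMellin (fun y : ℝ ↦ (p * y + q)⁻¹) z
      (π / Complex.sin (π * z) * (p ^ (-z) * q ^ (z - 1))) := by
  have hz : 0 < (1 - z).re := by simpa using hz₁
  have hlaplace : EqOn (fun y : ℝ ↦ ∫ t in Ioi (0 : ℝ),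
      Complex.exp (-(q * t)) * Complex.exp (-(p * y * t))) (fun y ↦ (p * y + q)⁻¹) (Ioi 0) := by
    intro y (hy : 0 < y)
    have hre : (-(p * y + q)).re < 0 := by
      simpa only [Complex.neg_re, Complex.add_re, Complex.re_mul_ofReal, neg_neg_iff_pos]
        using add_pos (mul_pos hp hy) hq
    calc ∫ t in Ioi (0 : ℝ), Complex.exp (-(q * t)) * Complex.exp (-(p * y * t))
        = ∫ t in Ioi (0 : ℝ), Complex.exp (-(p * y + q) * t) := by
          congr 1 with t
          rw [← Complex.exp_add]
          ring_nf
      _ = (p * y + q)⁻¹ := by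
          rw [integral_exp_mul_complex_Ioi hre, Complex.ofReal_zero, mul_zero, Complex.exp_zero,
            neg_div_neg_eq, one_div]
  rw [← hasMellin_congr hlaplace]
  convert hasMellin_laplace hp hz₀ (mellinConvergent_cexp_neg_mul hz hq) using 1
  rw [mellin_cexp_neg_mul hz hq, ← Complex.Gamma_mul_Gamma_one_sub, neg_sub]
  ring

/-- `π μ` times the density of `X ^ μ` at `y`, for `θ = π μ` and `X` a quotient of two independent
positive `μ`-stable random variables (Lamperti's law). The angle is kept as a free parameter and the
normalization is left out, as its Mellin transform is explicit for every `θ ∈ (-π, π)`. -/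
noncomputable def lampertiKernel (θ y : ℝ) : ℝ :=
  sin θ / (y ^ 2 + 2 * y * cos θ + 1)

theorem one_add_cos_div_two_mul_one_add_sq_le (θ y : ℝ) :
    (1 + cos θ) / 2 * (1 + y) ^ 2 ≤ y ^ 2 + 2 * y * cos θ + 1 := by
  linarith [mul_nonneg (sub_nonneg.2 (cos_le_one θ)) (sq_nonneg (1 - y))]

theorem neg_one_lt_cos {θ : ℝ} (hθ : θ ∈ Ioo (-π) π) : -1 < cos θ := by
  rw [← cos_pi, ← cos_abs θ]
  exact cos_lt_cos_of_nonneg_of_le_pi (abs_nonneg θ) le_rfl (abs_lt.2 hθ)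

theorem sq_add_two_mul_cos_add_one_pos {θ : ℝ} (hθ : θ ∈ Ioo (-π) π) {y : ℝ} (hy : 0 ≤ y) :
    0 < y ^ 2 + 2 * y * cos θ + 1 := by
  have hcos : 0 < 1 + cos θ := by linarith [neg_one_lt_cos hθ]
  exact lt_of_lt_of_le (by positivity) (one_add_cos_div_two_mul_one_add_sq_le θ y)

theorem lampertiKernel_nonneg {θ : ℝ} (hθ : θ ∈ Ico 0 π) {y : ℝ} (hy : 0 ≤ y) :
    0 ≤ lampertiKernel θ y :=
  div_nonneg (sin_nonneg_of_mem_Icc (Ico_subset_Icc_self hθ))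
    (sq_add_two_mul_cos_add_one_pos (Ico_subset_Ioo_left (neg_lt_zero.2 pi_pos) hθ) hy).le

theorem continuousOn_lampertiKernel {θ : ℝ} (hθ : θ ∈ Ioo (-π) π) :
    ContinuousOn (lampertiKernel θ) (Ici 0) :=
  .div continuousOn_const (by fun_prop) fun _ hy ↦ (sq_add_two_mul_cos_add_one_pos hθ hy).ne'

theorem abs_lampertiKernel_le {θ : ℝ} (hθ : θ ∈ Ioo (-π) π) {y : ℝ} (hy : 0 < y) :
    |lampertiKernel θ y| ≤ 2 / (1 + cos θ) * y ^ (-2 : ℝ) := by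
  have hcos : 0 < 1 + cos θ := by linarith [neg_one_lt_cos hθ]
  have hden : (1 + cos θ) / 2 * y ^ 2 ≤ y ^ 2 + 2 * y * cos θ + 1 :=
    (by gcongr; linarith : _ ≤ (1 + cos θ) / 2 * (1 + y) ^ 2).trans
      (one_add_cos_div_two_mul_one_add_sq_le θ y)
  rw [lampertiKernel, abs_div, abs_of_pos (sq_add_two_mul_cos_add_one_pos hθ hy.le)]
  calc |sin θ| / (y ^ 2 + 2 * y * cos θ + 1) ≤ 1 / ((1 + cos θ) / 2 * y ^ 2) := by
        gcongr
        exact abs_sin_le_one θ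
    _ = 2 / (1 + cos θ) * y ^ (-2 : ℝ) := by
        rw [rpow_neg hy.le, rpow_two]
        field_simp

theorem locallyIntegrableOn_lampertiKernel {θ : ℝ} (hθ : θ ∈ Ioo (-π) π) :
    LocallyIntegrableOn (fun y : ℝ ↦ (lampertiKernel θ y : ℂ)) (Ioi 0) :=
  (Complex.continuous_ofReal.comp_continuousOn
    ((continuousOn_lampertiKernel hθ).mono Ioi_subset_Ici_self)).locallyIntegrableOn
    measurableSet_Ioi

theorem isBigO_lampertiKernel_atTop {θ : ℝ} (hθ : θ ∈ Ioo (-π) π) :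
    (fun y : ℝ ↦ (lampertiKernel θ y : ℂ)) =O[atTop] (· ^ (-2 : ℝ)) := by
  refine .of_bound (2 / (1 + cos θ)) ?_
  filter_upwards [eventually_gt_atTop 0] with y hy
  rw [Complex.norm_real, norm_of_nonneg (rpow_nonneg hy.le _)]
  exact abs_lampertiKernel_le hθ hy

theorem isBigO_lampertiKernel_nhdsGT_zero {θ : ℝ} (hθ : θ ∈ Ioo (-π) π) :
    (fun y : ℝ ↦ (lampertiKernel θ y : ℂ)) =O[𝓝[>] 0] (· ^ (-0 : ℝ)) := by
  have hlim := (Complex.continuous_ofReal.comp_continuousOn (continuousOn_lampertiKernel hθ))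
    |>.continuousWithinAt self_mem_Ici |>.mono_left (nhdsWithin_mono 0 Ioi_subset_Ici_self)
  simpa using hlim.isBigO_one ℝ

theorem mellinConvergent_lampertiKernel {θ : ℝ} (hθ : θ ∈ Ioo (-π) π) {z : ℂ} (hz₀ : 0 < z.re)
    (hz₂ : z.re < 2) : MellinConvergent (fun y : ℝ ↦ (lampertiKernel θ y : ℂ)) z :=
  mellinConvergent_of_isBigO_rpow (locallyIntegrableOn_lampertiKernel hθ)
    (isBigO_lampertiKernel_atTop hθ) hz₂ (isBigO_lampertiKernel_nhdsGT_zero hθ) hz₀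

theorem differentiableAt_mellin_lampertiKernel {θ : ℝ} (hθ : θ ∈ Ioo (-π) π) {z : ℂ}
    (hz₀ : 0 < z.re) (hz₂ : z.re < 2) :
    DifferentiableAt ℂ (mellin fun y : ℝ ↦ (lampertiKernel θ y : ℂ)) z :=
  mellin_differentiableAt_of_isBigO_rpow (locallyIntegrableOn_lampertiKernel hθ)
    (isBigO_lampertiKernel_atTop hθ) hz₂ (isBigO_lampertiKernel_nhdsGT_zero hθ) hz₀

theorem ofReal_lampertiKernel {θ y : ℝ} (hy : y ^ 2 + 2 * y * cos θ + 1 ≠ 0) {p q : ℂ}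
    (hp : p = Complex.exp ((-(θ / 2) : ℝ) * Complex.I))
    (hq : q = Complex.exp ((θ / 2 : ℝ) * Complex.I)) :
    (lampertiKernel θ y : ℂ) = (q * (q * y + p)⁻¹ - p * (p * y + q)⁻¹) / (2 * Complex.I) := by
  have hpq : p * q = 1 := by
    rw [hp, hq, ← Complex.exp_add]
    simp
  have hp_sq : p ^ 2 = Complex.cos θ - Complex.sin θ * Complex.I := by
    rw [hp, ← Complex.exp_nat_mul, Complex.cos_sub_sin_I]
    push_cast
    ring_nf
  have hq_sq : q ^ 2 = Complex.cos θ + Complex.sin θ * Complex.I := by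
    rw [hq, ← Complex.exp_nat_mul, ← Complex.exp_mul_I]
    push_cast
    ring_nf
  have hfactor : (y ^ 2 + 2 * y * Complex.cos θ + 1 : ℂ) = (q * y + p) * (p * y + q) := by
    linear_combination -(y ^ 2 + 1 : ℂ) * hpq - y * hp_sq - y * hq_sq
  have hne : (q * y + p) * (p * y + q) ≠ 0 := by
    rw [← hfactor]
    exact_mod_cast hy
  obtain ⟨hne₁, hne₂⟩ := mul_ne_zero_iff.1 hne
  rw [lampertiKernel]
  push_cast
  rw [hfactor, ← div_eq_mul_inv, ← div_eq_mul_inv, div_sub_div _ _ hne₁ hne₂, div_div,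
    div_eq_div_iff hne (mul_ne_zero hne (by simp))]
  linear_combination (q * y + p) * (p * y + q) * (hp_sq - hq_sq)

theorem exp_mul_I_cpow {φ : ℝ} (hφ : φ ∈ Ioo (-π) π) (s : ℂ) :
    Complex.exp (φ * Complex.I) ^ s = Complex.exp (φ * s * Complex.I) := by
  rw [Complex.cpow_def_of_ne_zero (Complex.exp_ne_zero _),
    Complex.log_exp (by simpa using hφ.1) (by simpa using hφ.2.le), mul_right_comm]

theorem exp_mul_I_mul_cpow_mul_cpow {φ : ℝ} (hφ : φ ∈ Ioo (-π) π) (z : ℂ) :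
    Complex.exp (φ * Complex.I) *
        (Complex.exp (φ * Complex.I) ^ (-z) * Complex.exp ((-φ : ℝ) * Complex.I) ^ (z - 1)) =
      Complex.exp ((1 - z) * (2 * φ) * Complex.I) := by
  rw [exp_mul_I_cpow hφ, exp_mul_I_cpow ⟨by linarith [hφ.2], by linarith [hφ.1]⟩,
    ← Complex.exp_add, ← Complex.exp_add]
  push_cast
  ring_nf

theorem exp_mul_I_mul_cpow_sub {φ : ℝ} (hφ : φ ∈ Ioo (-π) π) (z : ℂ) {p q : ℂ}
    (hp : p = Complex.exp ((-φ : ℝ) * Complex.I)) (hq : q = Complex.exp (φ * Complex.I)) :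
    q * (q ^ (-z) * p ^ (z - 1)) - p * (p ^ (-z) * q ^ (z - 1)) =
      2 * Complex.I * Complex.sin ((1 - z) * (2 * φ)) := by
  have hneg := exp_mul_I_mul_cpow_mul_cpow (φ := -φ) ⟨by linarith [hφ.2], by linarith [hφ.1]⟩ z
  rw [neg_neg, Complex.ofReal_neg φ, mul_neg, mul_neg, ← Complex.ofReal_neg] at hneg
  rw [hp, hq, exp_mul_I_mul_cpow_mul_cpow hφ, hneg]
  linear_combination -Complex.I * Complex.two_sin ((1 - z) * (2 * φ)) +
    (Complex.exp ((1 - z) * (2 * φ) * Complex.I) - Complex.exp (-((1 - z) * (2 * φ)) * Complex.I)) *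
      Complex.I_sq

theorem mellin_lampertiKernel_of_re_lt_one {θ : ℝ} (hθ : θ ∈ Ioo (-π) π) {z : ℂ}
    (hz₀ : 0 < z.re) (hz₁ : z.re < 1) :
    mellin (fun y : ℝ ↦ (lampertiKernel θ y : ℂ)) z =
      π * Complex.sin ((1 - z) * θ) / Complex.sin (π * z) := by
  have hφ : θ / 2 ∈ Ioo (-(π / 2)) (π / 2) := ⟨by linarith [hθ.1], by linarith [hθ.2]⟩
  let p := Complex.exp ((-(θ / 2) : ℝ) * Complex.I)
  let q := Complex.exp ((θ / 2 : ℝ) * Complex.I)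
  have hp : 0 < p.re := by
    rw [Complex.exp_ofReal_mul_I_re, cos_neg]
    exact cos_pos_of_mem_Ioo hφ
  have hq : 0 < q.re := by
    rw [Complex.exp_ofReal_mul_I_re]
    exact cos_pos_of_mem_Ioo hφ
  have hfrac : EqOn (fun y : ℝ ↦ (lampertiKernel θ y : ℂ))
      (fun y ↦ (q • (q * y + p)⁻¹ - p • (p * y + q)⁻¹) / (2 * Complex.I)) (Ioi 0) :=
    fun y hy ↦ ofReal_lampertiKernel (sq_add_two_mul_cos_add_one_pos hθ (le_of_lt hy)).ne' rfl rfl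
  have hqp := hasMellin_inv_mul_add hq hp hz₀ hz₁
  have hpq := hasMellin_inv_mul_add hp hq hz₀ hz₁
  have hφ' : θ / 2 ∈ Ioo (-π) π := ⟨by linarith [hφ.1, pi_pos], by linarith [hφ.2, pi_pos]⟩
  have hsin : q * (q ^ (-z) * p ^ (z - 1)) - p * (p ^ (-z) * q ^ (z - 1)) =
      2 * Complex.I * Complex.sin ((1 - z) * θ) := by
    rw [exp_mul_I_mul_cpow_sub hφ' z rfl rfl, Complex.ofReal_div, Complex.ofReal_ofNat,
      mul_div_cancel₀ _ two_ne_zero]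
  calc mellin (fun y : ℝ ↦ (lampertiKernel θ y : ℂ)) z
      = (q * (π / Complex.sin (π * z) * (q ^ (-z) * p ^ (z - 1))) -
          p * (π / Complex.sin (π * z) * (p ^ (-z) * q ^ (z - 1)))) / (2 * Complex.I) := by
        rw [← hqp.2, ← hpq.2, ← smul_eq_mul, ← smul_eq_mul, ← mellin_const_smul,
          ← mellin_const_smul, ← (hasMellin_sub (hqp.1.const_smul q) (hpq.1.const_smul p)).2,
          ← mellin_div_const]
        exact setIntegral_congr_fun measurableSet_Ioi fun y hy ↦ by simp only [hfrac hy]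
    _ = π / Complex.sin (π * z) * (2 * Complex.I * Complex.sin ((1 - z) * θ)) /
          (2 * Complex.I) := by
        rw [← hsin]
        ring
    _ = π * Complex.sin ((1 - z) * θ) / Complex.sin (π * z) := by
        rw [mul_left_comm, mul_div_cancel_left₀ _ (mul_ne_zero two_ne_zero Complex.I_ne_zero),
          div_mul_eq_mul_div]

theorem mem_integerComplement_of_re_lt_two {z : ℂ} (hz₀ : 0 < z.re) (hz₂ : z.re < 2)
    (hz₁ : z ≠ 1) : z ∈ Complex.integerComplement := by
  rintro ⟨k, rfl⟩
  rw [Complex.intCast_re] at hz₀ hz₂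
  norm_cast at hz₀ hz₁ hz₂
  lia

theorem isOpen_setOf_re_mem_Ioo (a b : ℝ) : IsOpen {z : ℂ | z.re ∈ Ioo a b} :=
  isOpen_Ioo.preimage Complex.continuous_re

theorem sin_pi_mul_mul_mellin_lampertiKernel {θ : ℝ} (hθ : θ ∈ Ioo (-π) π) {z : ℂ}
    (hz₀ : 0 < z.re) (hz₂ : z.re < 2) :
    Complex.sin (π * z) * mellin (fun y : ℝ ↦ (lampertiKernel θ y : ℂ)) z =
      π * Complex.sin ((1 - z) * θ) := by
  let U : Set ℂ := {w | w.re ∈ Ioo 0 2}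
  have hU : IsOpen U := isOpen_setOf_re_mem_Ioo 0 2
  have hU_conv : Convex ℝ U := (convex_Ioo 0 2).linear_preimage Complex.reLm
  refine AnalyticOnNhd.eqOn_of_preconnected_of_eventuallyEq (U := U) (z₀ := 1 / 2)
    (f := fun w ↦ Complex.sin (π * w) * mellin (fun y : ℝ ↦ (lampertiKernel θ y : ℂ)) w)
    (g := fun w ↦ π * Complex.sin ((1 - w) * θ))
    (DifferentiableOn.analyticOnNhd (fun w hw ↦ ?_) hU)
    (DifferentiableOn.analyticOnNhd (by fun_prop) hU) hU_conv.isPreconnected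
    (by norm_num [U]) ?_ ⟨hz₀, hz₂⟩
  · exact ((by fun_prop : DifferentiableAt ℂ (fun w ↦ Complex.sin (π * w)) w).mul
      (differentiableAt_mellin_lampertiKernel hθ hw.1 hw.2)).differentiableWithinAt
  · filter_upwards [(isOpen_setOf_re_mem_Ioo 0 1).mem_nhds (by norm_num)] with w ⟨hw₀, hw₁⟩
    rw [mellin_lampertiKernel_of_re_lt_one hθ hw₀ hw₁, mul_div_cancel₀]
    exact sin_pi_mul_ne_zero (mem_integerComplement_of_re_lt_two hw₀ (hw₁.trans one_lt_two)
      fun h ↦ by simp [h] at hw₁)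

theorem hasMellin_lampertiKernel {θ : ℝ} (hθ : θ ∈ Ioo (-π) π) {z : ℂ} (hz₀ : 0 < z.re)
    (hz₂ : z.re < 2) (hz₁ : z ≠ 1) :
    HasMellin (fun y : ℝ ↦ (lampertiKernel θ y : ℂ)) z
      (π * Complex.sin ((1 - z) * θ) / Complex.sin (π * z)) := by
  refine ⟨mellinConvergent_lampertiKernel hθ hz₀ hz₂, ?_⟩
  rw [eq_div_iff (sin_pi_mul_ne_zero (mem_integerComplement_of_re_lt_two hz₀ hz₂ hz₁)), mul_comm,
    sin_pi_mul_mul_mellin_lampertiKernel hθ hz₀ hz₂]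

theorem hasMellin_lampertiKernel_div_pi_mul {μ : ℝ} (hμ : μ ∈ Ioo 0 1) {s : ℂ} (hs₀ : s ≠ 0)
    (hsμ : |s.re| < μ) :
    HasMellin (fun y ↦ ((lampertiKernel (π * μ) y / (π * μ) : ℝ) : ℂ)) (s / μ + 1)
      (Complex.sin (π * s) / (μ * Complex.sin (π * s / μ))) := by
  have hμC : (μ : ℂ) ≠ 0 := by exact_mod_cast hμ.1.ne'
  have hθ : π * μ ∈ Ioo (-π) π :=
    ⟨by nlinarith [pi_pos, hμ.1], mul_lt_of_lt_one_right pi_pos hμ.2⟩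
  have hre : |(s / μ).re| < 1 := by
    rwa [Complex.div_ofReal_re, abs_div, abs_of_pos hμ.1, div_lt_one hμ.1]
  have hmellin := hasMellin_lampertiKernel hθ (z := s / μ + 1)
    (by rw [Complex.add_re, Complex.one_re]; linarith [(abs_lt.1 hre).1])
    (by rw [Complex.add_re, Complex.one_re]; linarith [(abs_lt.1 hre).2])
    (by simpa [hμC] using hs₀)
  have hnum : (1 - (s / μ + 1)) * (π * μ) = -(π * s) := by
    field_simp
    ring
  have hden : π * (s / μ + 1) = π * s / μ + π := by ring
  push_cast
  refine ⟨hmellin.1.div_const _, ?_⟩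
  rw [mellin_div_const, hmellin.2]
  push_cast
  rw [hnum, hden, Complex.sin_neg, Complex.sin_add_pi]
  field_simp

section Law

variable {Ω : Type*} [MeasurableSpace Ω] {P : Measure Ω} {Y : Ω → ℝ} {f : ℝ → ℝ}

theorem integrable_cpow_iff_mellinConvergent_of_map_eq_withDensity (hY : AEMeasurable Y P)
    (hf : Measurable f) (hf₀ : ∀ y, 0 < y → 0 ≤ f y)
    (hlaw : P.map Y = (volume.restrict (Ici 0)).withDensity fun y ↦ ENNReal.ofReal (f y)) (w : ℂ) :
    Integrable (fun ω ↦ (Y ω : ℂ) ^ w) P ↔ MellinConvergent (fun y ↦ (f y : ℂ)) (w + 1) := by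
  have hpow : Measurable fun y : ℝ ↦ (y : ℂ) ^ w := by fun_prop
  change Integrable ((fun y : ℝ ↦ (y : ℂ) ^ w) ∘ Y) P ↔ _
  rw [← integrable_map_measure hpow.aestronglyMeasurable hY, hlaw, ← restrict_Ioi_eq_restrict_Ici,
    integrable_withDensity_iff_integrable_smul' hf.ennreal_ofReal (by simp), MellinConvergent,
    IntegrableOn]
  refine integrable_congr ?_
  filter_upwards [ae_restrict_mem measurableSet_Ioi] with y hy
  rw [ENNReal.toReal_ofReal (hf₀ y hy), add_sub_cancel_right, smul_eq_mul, mul_comm,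
    Complex.real_smul]

theorem integral_cpow_eq_mellin_of_map_eq_withDensity (hY : AEMeasurable Y P) (hf : Measurable f)
    (hf₀ : ∀ y, 0 < y → 0 ≤ f y)
    (hlaw : P.map Y = (volume.restrict (Ici 0)).withDensity fun y ↦ ENNReal.ofReal (f y)) (w : ℂ) :
    ∫ ω, (Y ω : ℂ) ^ w ∂P = mellin (fun y ↦ (f y : ℂ)) (w + 1) := by
  have hpow : Measurable fun y : ℝ ↦ (y : ℂ) ^ w := by fun_prop
  rw [← integral_map hY hpow.aestronglyMeasurable (f := fun y : ℝ ↦ (y : ℂ) ^ w), hlaw,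
    ← restrict_Ioi_eq_restrict_Ici,
    integral_withDensity_eq_integral_toReal_smul hf.ennreal_ofReal (by simp), mellin]
  refine setIntegral_congr_fun measurableSet_Ioi fun y hy ↦ ?_
  simp only [ENNReal.toReal_ofReal (hf₀ y hy), add_sub_cancel_right, smul_eq_mul, Complex.real_smul,
    mul_comm]

end Law

theorem mellin_transform_of_stable_ratio_general
    {Ω : Type*} [MeasurableSpace Ω] {P : Measure Ω} {μ : ℝ} (hμ : μ ∈ Ioo (0 : ℝ) 1)
    {X : Ω → ℝ} (hX : AEMeasurable X P) (hXpos : 0 ≤ᵐ[P] X)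
    (hlaw : P.map (fun ω ↦ X ω ^ μ) =
      (volume.restrict (Ici (0 : ℝ))).withDensity
        (fun y ↦ ENNReal.ofReal (sin (π * μ) / (π * μ) *
          (1 / (y ^ 2 + 2 * y * cos (π * μ) + 1)))))
    {s : ℂ} (hs₀ : s ≠ 0) (hsμ : |s.re| < μ) :
    Integrable (fun ω ↦ (X ω : ℂ) ^ s) P ∧
      ∫ ω, (X ω : ℂ) ^ s ∂P = Complex.sin (π * s) / (μ * Complex.sin (π * s / μ)) := by
  have hμC : (μ : ℂ) ≠ 0 := by exact_mod_cast hμ.1.ne'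
  have hθ : π * μ ∈ Ioo 0 π := ⟨mul_pos pi_pos hμ.1, mul_lt_of_lt_one_right pi_pos hμ.2⟩
  have hdensity : ∀ y, sin (π * μ) / (π * μ) * (1 / (y ^ 2 + 2 * y * cos (π * μ) + 1)) =
      lampertiKernel (π * μ) y / (π * μ) := fun y ↦ by rw [lampertiKernel]; ring
  have hdensity₀ : ∀ y, 0 < y → 0 ≤ lampertiKernel (π * μ) y / (π * μ) := fun y hy ↦
    div_nonneg (lampertiKernel_nonneg (Ioo_subset_Ico_self hθ) hy.le) hθ.1.le
  have hdensity_meas : Measurable fun y ↦ lampertiKernel (π * μ) y / (π * μ) := by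
    unfold lampertiKernel
    fun_prop
  simp only [hdensity] at hlaw
  have hpow : (fun ω ↦ ((X ω ^ μ : ℝ) : ℂ) ^ (s / μ)) =ᵐ[P] fun ω ↦ (X ω : ℂ) ^ s := by
    filter_upwards [hXpos] with ω hω
    rw [← Complex.cpow_mul_ofReal_nonneg hω, mul_div_cancel₀ _ hμC]
  rw [← integrable_congr hpow, ← integral_congr_ae hpow,
    integrable_cpow_iff_mellinConvergent_of_map_eq_withDensity (hX.pow_const μ) hdensity_meas
      hdensity₀ hlaw,
    integral_cpow_eq_mellin_of_map_eq_withDensity (hX.pow_const μ) hdensity_meas hdensity₀ hlaw]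
  exact hasMellin_lampertiKernel_div_pi_mul hμ hs₀ hsμ

theorem mellin_transform_of_stable_ratio
    {Ω : Type*} [MeasurableSpace Ω] (P : Measure Ω) [IsProbabilityMeasure P]
    (μ : ℝ) (hμ : μ ∈ Set.Ioo (0:ℝ) 1)
    (X : Ω → ℝ) (hX : Measurable X) (hXpos : ∀ ω, 0 ≤ X ω)
    (hlaw : P.map (fun ω => X ω ^ μ) =
      (volume.restrict (Set.Ici (0:ℝ))).withDensity
        (fun y => ENNReal.ofReal (Real.sin (π * μ) / (π * μ) *
          (1 / (y ^ 2 + 2 * y * Real.cos (π * μ) + 1))))) :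
    ∀ s : ℝ, 0 < s → s < μ →
      ∫ ω, (X ω) ^ s ∂P = Real.sin (π * s) / (μ * Real.sin (π * s / μ)) := by
  intro s hs₀ hsμ
  have hmellin := (mellin_transform_of_stable_ratio_general hμ hX.aemeasurable (ae_of_all _ hXpos)
    hlaw (s := s) (by exact_mod_cast hs₀.ne') (by simpa [abs_of_pos hs₀] using hsμ)).2
  simp only [← Complex.ofReal_cpow (hXpos _), integral_complex_ofReal] at hmellin
  exact_mod_cast hmellin
end
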